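/- For every (z,y) ∈ I_* × W, the polynomial X^z_y is divisible by u^{l(y)} in ℤ[u] (hence divisible by u^{max(l(z),l(y))}). -/

import Mathlib

open Polynomial
open scoped Classical

/-- The characterization (Proposition 1.2) of the polynomials `X^z_y ∈ ℤ[u]`, indexed by pairs
`(z, y)` with `z` a twisted involution (`st z = z⁻¹`) and `y ∈ W`: `X^z_1 = δ_{z,1}`, and for
`s ∈ S`, `y > ys`, the recursions 1.2(i)–(iv) hold. -/
def XRec {B W : Type} [Group W] {M : CoxeterMatrix B} (cs : CoxeterSystem M W)
    (st : W ≃* W) (P : {z : W // st z = z⁻¹} → W → Polynomial ℤ) : Prop :=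
  (∀ z : {z : W // st z = z⁻¹}, P z 1 = if z.1 = 1 then 1 else 0) ∧
  ∀ (i : B) (y : W), cs.length (y * cs.simple i) < cs.length y →
    ∀ z : {z : W // st z = z⁻¹},
      (cs.simple i * z.1 = z.1 * st (cs.simple i) →
        cs.length z.1 < cs.length (cs.simple i * z.1) →
        ∀ h : st (cs.simple i * z.1) = (cs.simple i * z.1)⁻¹,
          P z y = X * P z (y * cs.simple i) +
            (X + 1) * P ⟨cs.simple i * z.1, h⟩ (y * cs.simple i)) ∧
      (cs.simple i * z.1 = z.1 * st (cs.simple i) →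
        cs.length (cs.simple i * z.1) < cs.length z.1 →
        ∀ h : st (cs.simple i * z.1) = (cs.simple i * z.1)⁻¹,
          P z y = (X ^ 2 - X - 1) * P z (y * cs.simple i) +
            (X ^ 2 - X) * P ⟨cs.simple i * z.1, h⟩ (y * cs.simple i)) ∧
      (cs.simple i * z.1 ≠ z.1 * st (cs.simple i) →
        cs.length z.1 < cs.length (cs.simple i * z.1) →
        ∀ h : st (cs.simple i * z.1 * st (cs.simple i)) =
            (cs.simple i * z.1 * st (cs.simple i))⁻¹,
          P z y = P ⟨cs.simple i * z.1 * st (cs.simple i), h⟩ (y * cs.simple i)) ∧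
      (cs.simple i * z.1 ≠ z.1 * st (cs.simple i) →
        cs.length (cs.simple i * z.1) < cs.length z.1 →
        ∀ h : st (cs.simple i * z.1 * st (cs.simple i)) =
            (cs.simple i * z.1 * st (cs.simple i))⁻¹,
          P z y = (X ^ 2 - 1) * P z (y * cs.simple i) +
            X ^ 2 * P ⟨cs.simple i * z.1 * st (cs.simple i), h⟩ (y * cs.simple i))

namespace InvHecke

/-! ### The reflection cocycle and its consequences -/

section Cocycle

variable {B W : Type} [Group W] {M : CoxeterMatrix B} (cs : CoxeterSystem M W)

/-- The generator action on `W × ZMod 2`. -/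
noncomputable def genAct (i : B) : Function.End (W × ZMod 2) :=
  fun a => (cs.simple i * a.1 * cs.simple i, a.2 + if a.1 = cs.simple i then 1 else 0)

theorem genAct_pair_pow (i j : B) (n : ℕ) (a : W × ZMod 2) :
    ((genAct cs i * genAct cs j) ^ n) a =
      ((cs.simple i * cs.simple j) ^ n * a.1 * ((cs.simple i * cs.simple j) ^ n)⁻¹,
        a.2 + ∑ k ∈ Finset.range (2 * n),
          if a.1 = cs.simple j * (cs.simple i * cs.simple j) ^ k then 1 else 0) := by
  induction n with
  | zero => simp; rfl
  | succ n ih =>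
    have hconj : ∀ k : ℕ, cs.simple j * (cs.simple i * cs.simple j) ^ k * cs.simple j =
        ((cs.simple i * cs.simple j) ^ k)⁻¹ := by
      intro k
      induction k with
      | zero => simp
      | succ k ihk =>
        have e : ((cs.simple i * cs.simple j) ^ (k + 1))⁻¹ =
            (cs.simple i * cs.simple j)⁻¹ * ((cs.simple i * cs.simple j) ^ k)⁻¹ := by
          rw [pow_succ, mul_inv_rev]
        rw [e, ← ihk, pow_succ']
        simp [mul_assoc]
    have h1 : ∀ t : W, (cs.simple i * cs.simple j) ^ n * t * ((cs.simple i * cs.simple j) ^ n)⁻¹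
        = cs.simple j ↔ t = cs.simple j * (cs.simple i * cs.simple j) ^ (2 * n) := by
      intro t
      rw [mul_inv_eq_iff_eq_mul, ← eq_inv_mul_iff_mul_eq, ← hconj n, two_mul, pow_add]
      simp [mul_assoc]
    have h2 : ∀ t : W, cs.simple j * ((cs.simple i * cs.simple j) ^ n * t *
        ((cs.simple i * cs.simple j) ^ n)⁻¹) * cs.simple j
        = cs.simple i ↔ t = cs.simple j * (cs.simple i * cs.simple j) ^ (2 * n + 1) := by
      intro t
      have e : cs.simple j * (cs.simple i * cs.simple j) ^ (2 * n + 1) =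
          ((cs.simple i * cs.simple j) ^ n)⁻¹ * (cs.simple j * cs.simple i * cs.simple j) *
            (cs.simple i * cs.simple j) ^ n := by
        rw [← hconj n, show 2 * n + 1 = n + 1 + n by ring, pow_add, pow_succ]
        simp [mul_assoc]
      rw [e]
      generalize (cs.simple i * cs.simple j) ^ n = g
      constructor
      · intro h
        rw [← h]
        simp [mul_assoc]
      · intro h
        rw [h]
        simp [mul_assoc]
    rw [pow_succ']
    change (genAct cs i * genAct cs j) (((genAct cs i * genAct cs j) ^ n) a) = _
    rw [ih]
    change genAct cs i (genAct cs j _) = _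
    simp only [genAct, h1, h2]
    refine Prod.ext ?_ ?_
    · simp [pow_succ', mul_assoc]
    · simp only [show 2 * (n + 1) = 2 * n + 1 + 1 by ring, Finset.sum_range_succ]
      ring

theorem genAct_liftable : M.IsLiftable (genAct cs) := by
  intro i j
  funext a
  rw [genAct_pair_pow]
  have hp := cs.simple_mul_simple_pow i j
  refine Prod.ext ?_ ?_
  · simp [hp]; rfl
  · have : ∀ k, (cs.simple i * cs.simple j) ^ (M i j + k) = (cs.simple i * cs.simple j) ^ k := by
      intro k; rw [pow_add, hp, one_mul]
    simp only [two_mul, Finset.sum_range_add, this]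
    rw [CharTwo.add_self_eq_zero, add_zero]
    rfl

/-- The homomorphism to self-maps of `W × ZMod 2`. -/
noncomputable def act : W →* Function.End (W × ZMod 2) :=
  cs.lift ⟨genAct cs, genAct_liftable cs⟩

/-- The cocycle. -/
noncomputable def eta (w t : W) : ZMod 2 := (act cs w (t, 0)).2

theorem act_simple (i : B) (a : W × ZMod 2) : act cs (cs.simple i) a =
    (cs.simple i * a.1 * cs.simple i, a.2 + if a.1 = cs.simple i then 1 else 0) := by
  unfold act
  rw [cs.lift_apply_simple]
  rfl

theorem act_mul (x y : W) (a : W × ZMod 2) : act cs (x * y) a = act cs x (act cs y a) := by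
  rw [map_mul]; rfl

theorem act_apply (w t : W) (e : ZMod 2) : act cs w (t, e) = (w * t * w⁻¹, e + eta cs w t) := by
  unfold eta
  induction w using cs.simple_induction_left generalizing t e with
  | one =>
    have h1 : ∀ a : W × ZMod 2, act cs 1 a = a := by
      intro a; rw [map_one]; rfl
    simp [h1]
  | mul_simple_left w i ih =>
    rw [act_mul, act_mul, ih t e, ih t 0, act_simple, act_simple]
    refine Prod.ext ?_ ?_
    · simp [mul_assoc]
    · simp [add_assoc]

theorem eta_mul (x y t : W) : eta cs (x * y) t = eta cs y t + eta cs x (y * t * y⁻¹) := by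
  have h : act cs (x * y) (t, 0) = act cs x (act cs y (t, 0)) := act_mul cs x y _
  rw [act_apply, act_apply, act_apply] at h
  simpa using congrArg Prod.snd h

theorem eta_one (t : W) : eta cs 1 t = 0 := by
  simp [eta, map_one]; rfl

theorem eta_simple (i : B) (t : W) :
    eta cs (cs.simple i) t = if t = cs.simple i then 1 else 0 := by
  simp [eta, act_simple]

theorem mem_ris_of_eta (ω : List B) (t : W) (h : eta cs (cs.wordProd ω) t ≠ 0) :
    t ∈ cs.rightInvSeq ω := by
  induction ω with
  | nil => simp [eta_one] at h
  | cons i ω ih =>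
    rw [cs.wordProd_cons, eta_mul] at h
    rw [CoxeterSystem.rightInvSeq]
    by_cases h0 : eta cs (cs.wordProd ω) t = 0
    · rw [h0, zero_add, eta_simple] at h
      have h' : cs.wordProd ω * t * (cs.wordProd ω)⁻¹ = cs.simple i := by
        by_contra hc
        simp [hc] at h
      refine List.mem_cons.2 (Or.inl ?_)
      rw [← h']; simp [mul_assoc]
    · exact List.mem_cons.2 (Or.inr (ih h0))

theorem length_lt_of_eta {w t : W} (h : eta cs w t ≠ 0) :
    cs.length (w * t) < cs.length w := by
  obtain ⟨ω, hω, rfl⟩ := cs.exists_isReduced w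
  exact (cs.isRightInversion_of_mem_rightInvSeq hω (mem_ris_of_eta cs ω t h)).2

theorem eta_refl (x : W) (i : B) :
    eta cs (x * cs.simple i * x⁻¹) (x * cs.simple i * x⁻¹) = 1 := by
  have h1 : eta cs (x * x⁻¹) (x * cs.simple i * x⁻¹) = 0 := by
    rw [mul_inv_cancel, eta_one]
  rw [eta_mul] at h1
  have e1 : x⁻¹ * (x * cs.simple i * x⁻¹) * x⁻¹⁻¹ = cs.simple i := by simp [mul_assoc]
  rw [e1] at h1
  rw [eta_mul, eta_mul, e1, eta_simple]
  have e2 : cs.simple i * cs.simple i * (cs.simple i)⁻¹ = cs.simple i := by simp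
  rw [e2, if_pos rfl]
  linear_combination h1

theorem eta_of_length_lt {w x : W} {i : B}
    (h : cs.length (w * (x * cs.simple i * x⁻¹)) < cs.length w) :
    eta cs w (x * cs.simple i * x⁻¹) ≠ 0 := by
  intro h0
  set t := x * cs.simple i * x⁻¹ with ht
  have htt : t * t = 1 := by simp [ht, mul_assoc]
  have h1 : eta cs (w * t) t ≠ 0 := by
    rw [eta_mul, mul_inv_cancel_right, h0, add_zero, ht, eta_refl]
    exact one_ne_zero
  have h2 := length_lt_of_eta cs h1
  rw [mul_assoc, htt, mul_one] at h2
  omega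

/-- The basic fact: `xs > x` and `sz < z` imply `xsz < xz`. -/
theorem key {x z : W} {i : B} (hx : cs.length x < cs.length (x * cs.simple i))
    (hz : cs.length (cs.simple i * z) < cs.length z) :
    cs.length (x * cs.simple i * z) < cs.length (x * z) := by
  have e1 : z * (z⁻¹ * cs.simple i * z⁻¹⁻¹) = cs.simple i * z := by simp [mul_assoc]
  have e2 : x * z * (z⁻¹ * cs.simple i * z⁻¹⁻¹) = x * cs.simple i * z := by simp [mul_assoc]
  have e3 : z * (z⁻¹ * cs.simple i * z⁻¹⁻¹) * z⁻¹ = cs.simple i := by simp [mul_assoc]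
  have h1 : eta cs z (z⁻¹ * cs.simple i * z⁻¹⁻¹) ≠ 0 :=
    eta_of_length_lt cs (by rw [e1]; exact hz)
  have h2 : eta cs x (cs.simple i) = 0 := by
    by_contra hc
    have := length_lt_of_eta cs hc
    omega
  rw [← e2]
  apply length_lt_of_eta
  rw [eta_mul, e3, h2, add_zero]
  exact h1

/-- Exchange: `qg > g` and `qgt < gt` imply `qg = gt`. -/
theorem exch {g : W} {i j : B} (h1 : cs.length g < cs.length (cs.simple i * g))
    (h2 : cs.length (cs.simple i * g * cs.simple j) < cs.length (g * cs.simple j)) :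
    cs.simple i * g = g * cs.simple j := by
  have h := key cs (x := g⁻¹) (z := g * cs.simple j) (i := i)
    (by rw [cs.length_inv, ← cs.length_inv (g⁻¹ * _)]; simpa using h1)
    (by rw [← mul_assoc]; exact h2)
  rw [inv_mul_cancel_left, cs.length_simple, Nat.lt_one_iff, cs.length_eq_zero_iff] at h
  have h3 : cs.simple i * g * cs.simple j = g := by
    have := congrArg (g * ·) h
    simpa [mul_assoc] using this
  have := congrArg (· * cs.simple j) h3
  simpa [mul_assoc] using this

end Cocycle

/-! ### The recursion -/

section Rec

variable {B W : Type} [Group W] {M : CoxeterMatrix B}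

/-- The recursion, for the extension by zero to all of `W × W`. -/
structure Setup (cs : CoxeterSystem M W) (st : W ≃* W) (p : W → W → Polynomial ℤ) : Prop where
  invol : ∀ w, st (st w) = w
  simples : ∀ i : B, ∃ j : B, st (cs.simple i) = cs.simple j
  base : ∀ z, p z 1 = if z = 1 then 1 else 0
  r1 : ∀ (i : B) (y z : W), cs.length (y * cs.simple i) < cs.length y → st z = z⁻¹ →
    cs.simple i * z = z * st (cs.simple i) → cs.length z < cs.length (cs.simple i * z) →
    p z y = X * p z (y * cs.simple i) + (X + 1) * p (cs.simple i * z) (y * cs.simple i)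
  r2 : ∀ (i : B) (y z : W), cs.length (y * cs.simple i) < cs.length y → st z = z⁻¹ →
    cs.simple i * z = z * st (cs.simple i) → cs.length (cs.simple i * z) < cs.length z →
    p z y = (X ^ 2 - X - 1) * p z (y * cs.simple i) +
      (X ^ 2 - X) * p (cs.simple i * z) (y * cs.simple i)
  r3 : ∀ (i : B) (y z : W), cs.length (y * cs.simple i) < cs.length y → st z = z⁻¹ →
    cs.simple i * z ≠ z * st (cs.simple i) → cs.length z < cs.length (cs.simple i * z) →
    p z y = p (cs.simple i * z * st (cs.simple i)) (y * cs.simple i)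
  r4 : ∀ (i : B) (y z : W), cs.length (y * cs.simple i) < cs.length y → st z = z⁻¹ →
    cs.simple i * z ≠ z * st (cs.simple i) → cs.length (cs.simple i * z) < cs.length z →
    p z y = (X ^ 2 - 1) * p z (y * cs.simple i) +
      X ^ 2 * p (cs.simple i * z * st (cs.simple i)) (y * cs.simple i)

variable {cs : CoxeterSystem M W} {st : W ≃* W} {p : W → W → Polynomial ℤ}

theorem tw_comm {z : W} {i : B} (hz : st z = z⁻¹)
    (h : cs.simple i * z = z * st (cs.simple i)) :
    st (cs.simple i * z) = (cs.simple i * z)⁻¹ := by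
  rw [map_mul, hz, mul_inv_rev, cs.inv_simple, eq_inv_mul_iff_mul_eq, ← mul_assoc, ← h]
  simp

theorem Setup.tw_conj (S : Setup cs st p) {z q : W} (hz : st z = z⁻¹) (hq : q⁻¹ = q) :
    st (q * z * st q) = (q * z * st q)⁻¹ := by
  rw [map_mul, map_mul, hz, S.invol, mul_inv_rev, mul_inv_rev, hq, ← map_inv, hq, mul_assoc]

theorem Setup.length_st_le (S : Setup cs st p) (w : W) : cs.length (st w) ≤ cs.length w := by
  induction hn : cs.length w using Nat.strong_induction_on generalizing w with
  | _ n ih =>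
    by_cases hw : w = 1
    · simp [hw]
    · obtain ⟨i, hi⟩ := cs.exists_rightDescent_of_ne_one hw
      rw [cs.isRightDescent_iff] at hi
      obtain ⟨j, hj⟩ := S.simples i
      have h1 := ih (cs.length (w * cs.simple i)) (by omega) _ rfl
      have h2 : st w = st (w * cs.simple i) * cs.simple j := by
        rw [← hj, ← map_mul]; simp
      have h3 := cs.length_mul_le (st (w * cs.simple i)) (cs.simple j)
      rw [← h2, cs.length_simple] at h3
      omega

theorem Setup.length_st (S : Setup cs st p) (w : W) : cs.length (st w) = cs.length w := by
  apply le_antisymm (S.length_st_le w)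
  have := S.length_st_le (st w)
  rwa [S.invol] at this

/-- For a twisted involution `z`, `l(z s^*) = l(s z)`. -/
theorem Setup.length_tw (S : Setup cs st p) {z : W} (hz : st z = z⁻¹) (i : B) :
    cs.length (z * st (cs.simple i)) = cs.length (cs.simple i * z) := by
  rw [← S.length_st (z * _), map_mul, S.invol, hz, ← cs.length_inv (cs.simple i * z)]
  simp

theorem Setup.length_mul_st (S : Setup cs st p) (w : W) (i : B) :
    cs.length (w * st (cs.simple i)) = cs.length w + 1 ∨
      cs.length (w * st (cs.simple i)) + 1 = cs.length w := by
  obtain ⟨j, hj⟩ := S.simples i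
  rw [hj]; exact cs.length_mul_simple w j

theorem Setup.up (S : Setup cs st p) {z : W} (hz : st z = z⁻¹) {i : B}
    (h : cs.length z < cs.length (cs.simple i * z))
    (hne : cs.simple i * z ≠ z * st (cs.simple i)) :
    cs.length z + 2 = cs.length (cs.simple i * z * st (cs.simple i)) := by
  have h1 := S.length_mul_st (cs.simple i * z) i
  have h2 := cs.length_simple_mul z i
  by_contra hc
  obtain ⟨j, hj⟩ := S.simples i
  apply hne
  have h3 := S.length_tw hz i
  rw [hj] at h1 h3 hc ⊢
  exact exch cs h (by omega)

theorem Setup.down (S : Setup cs st p) {z : W} (hz : st z = z⁻¹) {i : B}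
    (h : cs.length (cs.simple i * z) < cs.length z)
    (hne : cs.simple i * z ≠ z * st (cs.simple i)) :
    cs.length (cs.simple i * z * st (cs.simple i)) + 2 = cs.length z := by
  have h1 := S.length_mul_st (cs.simple i * z) i
  have h2 := cs.length_simple_mul z i
  by_contra hc
  obtain ⟨j, hj⟩ := S.simples i
  apply hne
  have h3 := S.length_tw hz i
  rw [hj] at h1 h3 hc ⊢
  have h4 := exch cs (g := z * cs.simple j) (i := i) (j := j)
    (by rw [← mul_assoc]; omega) (by simpa [mul_assoc] using h)
  have := congrArg (· * cs.simple j) h4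
  simpa [mul_assoc] using this

theorem lt_or_lt (cs : CoxeterSystem M W) (i : B) (z : W) :
    cs.length z < cs.length (cs.simple i * z) ∨ cs.length (cs.simple i * z) < cs.length z := by
  have := cs.length_simple_mul z i
  omega

/-- Induction on `y` through right descents. -/
theorem right_ind (cs : CoxeterSystem M W) {Q : W → Prop} (h1 : Q 1)
    (hs : ∀ y i, cs.length (y * cs.simple i) < cs.length y → Q (y * cs.simple i) → Q y) (y : W) :
    Q y := by
  induction hn : cs.length y using Nat.strong_induction_on generalizing y with
  | _ n ih =>
    by_cases hw : y = 1
    · rw [hw]; exact h1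
    · obtain ⟨i, hi⟩ := cs.exists_rightDescent_of_ne_one hw
      exact hs y i hi (ih _ (by rw [← hn]; exact hi) _ rfl)

/-- Divisibility by `u^{l(z)}`. -/
theorem Setup.dvd_z (S : Setup cs st p) (y : W) :
    ∀ z, st z = z⁻¹ → X ^ cs.length z ∣ p z y := by
  induction y using right_ind cs with
  | h1 =>
    intro z hz
    rw [S.base]
    split_ifs with h
    · simp [h]
    · exact dvd_zero _
  | hs y i hy ih =>
    intro z hz
    have hl := cs.length_simple_mul z i
    by_cases hc : cs.simple i * z = z * st (cs.simple i)
    · have h1 := ih z hz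
      have h2 := ih _ (tw_comm hz hc)
      rcases lt_or_lt cs i z with h | h
      · rw [S.r1 i y z hy hz hc h]
        exact dvd_add (h1.mul_left _) (((pow_dvd_pow X (by omega)).trans h2).mul_left _)
      · rw [S.r2 i y z hy hz hc h]
        refine dvd_add (h1.mul_left _) ?_
        rw [show cs.length z = 1 + cs.length (cs.simple i * z) by omega, pow_add]
        exact mul_dvd_mul ⟨X - 1, by ring⟩ h2
    · have h1 := ih z hz
      have h2 := ih _ (S.tw_conj hz (cs.inv_simple i))
      rcases lt_or_lt cs i z with h | h
      · have := S.up hz h hc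
        rw [S.r3 i y z hy hz hc h]
        exact (pow_dvd_pow X (by omega)).trans h2
      · have := S.down hz h hc
        rw [S.r4 i y z hy hz hc h]
        refine dvd_add (h1.mul_left _) ?_
        rw [← this, add_comm, pow_add]
        exact mul_dvd_mul dvd_rfl h2

/-- Support condition: `X^z_y ≠ 0` implies `l(yz) ≤ l(y)`. -/
theorem Setup.supp (S : Setup cs st p) (y : W) :
    ∀ z, st z = z⁻¹ → p z y ≠ 0 → cs.length (y * z) ≤ cs.length y := by
  induction y using right_ind cs with
  | h1 =>
    intro z hz h
    rw [S.base] at h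
    by_cases h1 : z = 1
    · simp [h1]
    · simp [h1] at h
  | hs y i hy ih =>
    intro z hz hp
    have hl := cs.length_mul_simple y i
    have e1 : y * cs.simple i * (cs.simple i * z) = y * z := by simp [mul_assoc]
    by_cases hc : cs.simple i * z = z * st (cs.simple i)
    · have h12 : p z (y * cs.simple i) ≠ 0 ∨ p (cs.simple i * z) (y * cs.simple i) ≠ 0 := by
        by_contra hcon
        push Not at hcon
        apply hp
        rcases lt_or_lt cs i z with h | h
        · rw [S.r1 i y z hy hz hc h, hcon.1, hcon.2]; ring
        · rw [S.r2 i y z hy hz hc h, hcon.1, hcon.2]; ring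
      rcases h12 with h | h
      · have h1 := ih z hz h
        have h2 := S.length_mul_st (y * cs.simple i * z) i
        rw [mul_assoc _ z, ← hc, e1] at h2
        omega
      · have h1 := ih _ (tw_comm hz hc) h
        rw [e1] at h1
        omega
    · have h3 : p (cs.simple i * z * st (cs.simple i)) (y * cs.simple i) ≠ 0 →
          cs.length (y * z) ≤ cs.length y := by
        intro h
        have h1 := ih _ (S.tw_conj hz (cs.inv_simple i)) h
        have h2 := S.length_mul_st (y * z) i
        rw [← mul_assoc, e1] at h1
        omega
      rcases lt_or_lt cs i z with h | h
      · rw [S.r3 i y z hy hz hc h] at hp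
        exact h3 hp
      · by_cases h0 : p (cs.simple i * z * st (cs.simple i)) (y * cs.simple i) = 0
        · have h1 : p z (y * cs.simple i) ≠ 0 := by
            intro h1
            apply hp
            rw [S.r4 i y z hy hz hc h, h0, h1]; ring
          have h2 := ih z hz h1
          have h4 := key cs (x := y * cs.simple i) (z := z) (i := i) (by simpa using hy) h
          rw [mul_assoc _ (cs.simple i) z, e1] at h4
          omega
        · exact h3 h0

/-- One ascending step gains at least one power of `u`. -/
theorem Setup.step (S : Setup cs st p) {y z : W} {i : B}
    (hy : cs.length (y * cs.simple i) < cs.length y) (hz : st z = z⁻¹)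
    (h : cs.length z < cs.length (cs.simple i * z)) : X ^ (cs.length z + 1) ∣ p z y := by
  by_cases hc : cs.simple i * z = z * st (cs.simple i)
  · rw [S.r1 i y z hy hz hc h]
    refine dvd_add ?_ (((pow_dvd_pow X (by omega)).trans
      (S.dvd_z _ _ (tw_comm hz hc))).mul_left _)
    rw [pow_succ']
    exact mul_dvd_mul dvd_rfl (S.dvd_z _ _ hz)
  · have := S.up hz h hc
    rw [S.r3 i y z hy hz hc h]
    exact (pow_dvd_pow X (by omega)).trans (S.dvd_z _ _ (S.tw_conj hz (cs.inv_simple i)))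

/-- Induction step in `z`: all divisibilities follow from those at `z = 1`. -/
theorem Setup.dvd_y_of_one (S : Setup cs st p)
    (H : ∀ y, X ^ cs.length y ∣ p 1 y) (z : W) (hz : st z = z⁻¹) :
    ∀ y, X ^ cs.length y ∣ p z y := by
  induction hn : cs.length z using Nat.strong_induction_on generalizing z with
  | _ n ih =>
    by_cases h1 : z = 1
    · rw [h1]; exact H
    obtain ⟨i, hi⟩ := cs.exists_leftDescent_of_ne_one h1
    have hi : cs.length (cs.simple i * z) < cs.length z := hi
    intro y
    have hl := cs.length_mul_simple y i
    have e2 : y * cs.simple i * cs.simple i = y := by simp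
    by_cases hc : cs.simple i * z = z * st (cs.simple i)
    · have hz' := tw_comm hz hc
      have IH := ih _ (hn ▸ hi) _ hz' rfl
      have ez : cs.simple i * (cs.simple i * z) = z := by simp
      have hc' : cs.simple i * (cs.simple i * z) = cs.simple i * z * st (cs.simple i) := by
        conv_rhs => rw [mul_assoc, ← hc]
      have hlt : cs.length (cs.simple i * z) < cs.length (cs.simple i * (cs.simple i * z)) := by
        rw [ez]; exact hi
      have cop : IsCoprime ((X : Polynomial ℤ) ^ cs.length y) (X + 1) :=
        IsCoprime.pow_left ⟨-1, 1, by ring⟩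
      apply cop.dvd_of_dvd_mul_left
      rcases hl with hl | hl
      · have h := S.r1 i (y * cs.simple i) (cs.simple i * z) (by rw [e2]; omega) hz' hc' hlt
        rw [e2, ez] at h
        rw [show (X + 1) * p z y = p (cs.simple i * z) (y * cs.simple i) -
          X * p (cs.simple i * z) y by rw [h]; ring]
        exact dvd_sub ((pow_dvd_pow X (by omega)).trans (IH _)) ((IH y).mul_left _)
      · have h := S.r1 i y (cs.simple i * z) (by omega) hz' hc' hlt
        have h' := S.r2 i y z (by omega) hz hc hi
        rw [ez] at h
        have : (X + 1) * p z y = (X ^ 2 - X - 1) * p (cs.simple i * z) y +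
            X ^ 2 * p (cs.simple i * z) (y * cs.simple i) := by
          rw [h, h']; ring
        rw [this]
        refine dvd_add ((IH y).mul_left _) ?_
        rw [← hl, add_comm, pow_add]
        exact mul_dvd_mul (pow_dvd_pow X (by norm_num)) (IH _)
    · have hz' := S.tw_conj hz (cs.inv_simple i)
      have hd := S.down hz hi hc
      set z' := cs.simple i * z * st (cs.simple i) with hz'd
      have IH := ih _ (by omega) z' hz' rfl
      have hss : st (cs.simple i) * st (cs.simple i) = 1 := by rw [← map_mul]; simp
      have e3 : cs.simple i * z' = z * st (cs.simple i) := by simp [hz'd, mul_assoc]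
      have e4 : z' * st (cs.simple i) = cs.simple i * z := by
        rw [hz'd, mul_assoc, hss, mul_one]
      have ez : cs.simple i * z' * st (cs.simple i) = z := by
        rw [e3, mul_assoc, hss, mul_one]
      have hc' : cs.simple i * z' ≠ z' * st (cs.simple i) := by
        rw [e3, e4]; exact fun h => hc h.symm
      have hlt : cs.length z' < cs.length (cs.simple i * z') := by
        have := S.length_tw hz i
        have := cs.length_simple_mul z i
        rw [e3]; omega
      rcases hl with hl | hl
      · have h := S.r3 i (y * cs.simple i) z' (by rw [e2]; omega) hz' hc' hlt
        rw [e2, ez] at h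
        rw [← h]
        exact (pow_dvd_pow X (by omega)).trans (IH _)
      · have h := S.r3 i y z' (by omega) hz' hc' hlt
        have h' := S.r4 i y z (by omega) hz hc hi
        rw [ez] at h
        have : p z y = (X ^ 2 - 1) * p z' y + X ^ 2 * p z' (y * cs.simple i) := by
          rw [h, h']
        rw [this]
        refine dvd_add ((IH y).mul_left _) ?_
        rw [← hl, add_comm, pow_add]
        exact mul_dvd_mul (pow_dvd_pow X (by norm_num)) (IH _)

end Rec

/-! ### The parabolic subgroup generated by `s` and `s^*` -/

section Parabolic

variable {B W : Type} [Group W] {M : CoxeterMatrix B}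
variable {cs : CoxeterSystem M W} {st : W ≃* W} {p : W → W → Polynomial ℤ}

theorem length_list_le (cs : CoxeterSystem M W) {J : Set W} (hJ : ∀ q ∈ J, ∃ k, q = cs.simple k)
    (l : List W) (hl : ∀ q ∈ l, q ∈ J) : cs.length l.prod ≤ l.length := by
  induction l with
  | nil => simp
  | cons a l ih =>
    obtain ⟨k, hk⟩ := hJ a (hl a (by simp))
    have h1 := ih (fun q hq => hl q (by simp [hq]))
    have h2 := cs.length_simple_mul l.prod k
    rw [List.prod_cons, List.length_cons, hk]
    omega

theorem erase (cs : CoxeterSystem M W) {J : Set W} (hJ : ∀ q ∈ J, ∃ k, q = cs.simple k)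
    (l : List W) (hl : ∀ q ∈ l, q ∈ J) (hred : cs.length l.prod = l.length) (q : W) (hq : q ∈ J)
    (hlt : cs.length (l.prod * q) < cs.length l.prod) :
    ∃ l' : List W, (∀ q ∈ l', q ∈ J) ∧ l'.prod = l.prod * q ∧
      cs.length l'.prod = l'.length := by
  induction l with
  | nil => simp at hlt
  | cons a l ih =>
    have hl' : ∀ q ∈ l, q ∈ J := fun q hq => hl q (by simp [hq])
    have ha : a ∈ J := hl a (by simp)
    obtain ⟨k, hk⟩ := hJ a ha
    obtain ⟨j, hj⟩ := hJ q hq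
    have hle := length_list_le cs hJ l hl'
    have h2 := cs.length_simple_mul l.prod k
    have h3 := cs.length_mul_simple l.prod j
    have h4 := cs.length_mul_simple (a * l.prod) j
    rw [← hk] at h2
    rw [← hj] at h3 h4
    rw [List.prod_cons] at hred hlt ⊢
    rw [List.length_cons] at hred
    by_cases h : cs.length (l.prod * q) < cs.length l.prod
    · obtain ⟨l', h1, h5, h6⟩ := ih hl' (by omega) h
      refine ⟨a :: l', ?_, ?_, ?_⟩
      · intro b hb
        rcases List.mem_cons.1 hb with rfl | hb
        · exact ha
        · exact h1 b hb
      · rw [List.prod_cons, h5, mul_assoc]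
      · rw [h5] at h6
        rw [List.prod_cons, h5, ← mul_assoc, List.length_cons]
        omega
    · have e : a * l.prod = l.prod * q := by
        rw [hk, hj]
        apply exch cs
        · rw [← hk]; omega
        · rw [← hk, ← hj]; omega
      refine ⟨l, hl', ?_, by omega⟩
      rw [e, hj]; simp

theorem exists_red (cs : CoxeterSystem M W) {J : Set W} (hJ : ∀ q ∈ J, ∃ k, q = cs.simple k)
    {w : W} (hw : w ∈ Subgroup.closure J) :
    ∃ l : List W, (∀ q ∈ l, q ∈ J) ∧ l.prod = w ∧ cs.length l.prod = l.length := by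
  have stp : ∀ w q : W, q ∈ J →
      (∃ l : List W, (∀ q ∈ l, q ∈ J) ∧ l.prod = w ∧ cs.length l.prod = l.length) →
      ∃ l : List W, (∀ q ∈ l, q ∈ J) ∧ l.prod = w * q ∧ cs.length l.prod = l.length := by
    rintro w q hq ⟨l, h1, rfl, h3⟩
    obtain ⟨j, hj⟩ := hJ q hq
    by_cases h : cs.length (l.prod * q) < cs.length l.prod
    · exact erase cs hJ l h1 h3 q hq h
    · refine ⟨l ++ [q], ?_, by simp, ?_⟩
      · intro b hb
        rcases List.mem_append.1 hb with hb | hb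
        · exact h1 b hb
        · rw [List.mem_singleton.1 hb]; exact hq
      · have := cs.length_mul_simple l.prod j
        rw [← hj] at this
        simp only [List.prod_append, List.prod_singleton, List.length_append,
          List.length_singleton]
        omega
  induction hw using Subgroup.closure_induction_right with
  | one => exact ⟨[], by simp, by simp, by simp⟩
  | mul_right x hx q hq ih => exact stp x q hq ih
  | mul_inv_cancel x hx q hq ih =>
    obtain ⟨j, hj⟩ := hJ q hq
    have : q⁻¹ = q := by rw [hj, cs.inv_simple]
    rw [this]; exact stp x q hq ih

theorem exists_desc (cs : CoxeterSystem M W) {J : Set W} (hJ : ∀ q ∈ J, ∃ k, q = cs.simple k)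
    {w : W} (hw : w ∈ Subgroup.closure J) (h1 : w ≠ 1) :
    ∃ q ∈ J, cs.length (w * q) < cs.length w := by
  obtain ⟨l, hl, hp, hr⟩ := exists_red cs hJ (inv_mem hw)
  cases l with
  | nil =>
    exfalso; apply h1
    simpa using hp.symm
  | cons a l =>
    refine ⟨a, hl a (by simp), ?_⟩
    have hle := length_list_le cs hJ l (fun q hq => hl q (by simp [hq]))
    rw [hp, cs.length_inv, List.length_cons] at hr
    rw [List.prod_cons] at hp
    have e : w * a = (l.prod)⁻¹ := by
      have : w = (a * l.prod)⁻¹ := by rw [hp, inv_inv]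
      rw [this]; simp
    rw [e, cs.length_inv]
    omega

theorem additive (cs : CoxeterSystem M W) {J : Set W} (hJ : ∀ q ∈ J, ∃ k, q = cs.simple k)
    {x : W} (hx : ∀ h ∈ Subgroup.closure J, cs.length x ≤ cs.length (x * h))
    {w : W} (hw : w ∈ Subgroup.closure J) :
    cs.length (x * w) = cs.length x + cs.length w := by
  have up : ∀ w ∈ Subgroup.closure J, ∀ q ∈ J, cs.length w < cs.length (w * q) →
      cs.length (x * w) < cs.length (x * w * q) := by
    intro w hw q hq hlt
    obtain ⟨j, hj⟩ := hJ q hq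
    have h3 := cs.length_mul_simple (x * w) j
    rw [← hj] at h3
    by_contra hc
    have hk := key cs (x := w) (z := (x * w)⁻¹) (i := j) (by rw [← hj]; exact hlt)
      (by
        rw [← cs.length_inv, cs.length_inv (x * w), mul_inv_rev, inv_inv, cs.inv_simple, ← hj]
        omega)
    have h4 := hx (w * q * w⁻¹) (mul_mem (mul_mem hw (Subgroup.subset_closure hq)) (inv_mem hw))
    have e1 : w * (x * w)⁻¹ = x⁻¹ := by simp
    have e2 : (w * cs.simple j * (x * w)⁻¹)⁻¹ = x * (w * q * w⁻¹) := by
      rw [hj]; simp [mul_assoc]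
    rw [e1, cs.length_inv, ← cs.length_inv (w * _ * _), e2] at hk
    omega
  have stp : ∀ w ∈ Subgroup.closure J, ∀ q ∈ J,
      cs.length (x * w) = cs.length x + cs.length w →
      cs.length (x * (w * q)) = cs.length x + cs.length (w * q) := by
    intro w hw q hq h
    obtain ⟨j, hj⟩ := hJ q hq
    have h1 := cs.length_mul_simple (x * w) j
    have h2 := cs.length_mul_simple w j
    rw [← hj] at h1 h2
    rw [← mul_assoc]
    rcases h2 with h2 | h2
    · have := up w hw q hq (by omega)
      omega
    · have e : w * q * q = w := by rw [hj]; simp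
      have e' : x * (w * q) * q = x * w := by rw [hj]; simp [mul_assoc]
      have := up (w * q) (mul_mem hw (Subgroup.subset_closure hq)) q hq (by rw [e]; omega)
      rw [e', ← mul_assoc] at this
      omega
  induction hw using Subgroup.closure_induction_right with
  | one => simp
  | mul_right y hy q hq ih => exact stp y hy q hq ih
  | mul_inv_cancel y hy q hq ih =>
    obtain ⟨j, hj⟩ := hJ q hq
    have : q⁻¹ = q := by rw [hj, cs.inv_simple]
    rw [this]; exact stp y hy q hq ih

/-- Factorization `X^z_{xv} = X^z_v X^1_x` for `x` minimal in `xW_J` and `v, z ∈ W_J`. -/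
theorem Setup.factor (S : Setup cs st p) {J : Set W} (hJ : ∀ q ∈ J, ∃ k, q = cs.simple k)
    (hJst : ∀ q ∈ J, st q ∈ J)
    {x : W} (hx : ∀ h ∈ Subgroup.closure J, cs.length x ≤ cs.length (x * h))
    (v : W) (hv : v ∈ Subgroup.closure J) :
    ∀ z ∈ Subgroup.closure J, st z = z⁻¹ → p z (x * v) = p z v * p 1 x := by
  induction hn : cs.length v using Nat.strong_induction_on generalizing v with
  | _ n ih =>
    intro z hzJ hz
    by_cases h1 : v = 1
    · rw [h1, mul_one, S.base]
      split_ifs with h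
      · rw [h, one_mul]
      · rw [zero_mul]
        by_contra hc
        have h2 := S.supp x z hz hc
        have h3 := additive cs hJ hx hzJ
        exact h (cs.length_eq_zero_iff.1 (by omega))
    · obtain ⟨q, hq, hlt⟩ := exists_desc cs hJ hv h1
      have hqH := Subgroup.subset_closure hq
      have hqH' := Subgroup.subset_closure (hJst q hq)
      have hvq := mul_mem hv hqH
      have IH := ih _ (hn ▸ hlt) _ hvq rfl
      have a1 := additive cs hJ hx hv
      have a2 := additive cs hJ hx hvq
      obtain ⟨i, rfl⟩ := hJ q hq
      rw [← mul_assoc] at a2 IH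
      have hlt' : cs.length (x * v * cs.simple i) < cs.length (x * v) := by omega
      by_cases hc : cs.simple i * z = z * st (cs.simple i)
      · have I1 := IH z hzJ hz
        have I2 := IH _ (mul_mem hqH hzJ) (tw_comm hz hc)
        rcases lt_or_lt cs i z with h | h
        · rw [S.r1 i _ z hlt' hz hc h, S.r1 i _ z hlt hz hc h, I1, I2]; ring
        · rw [S.r2 i _ z hlt' hz hc h, S.r2 i _ z hlt hz hc h, I1, I2]; ring
      · have I1 := IH z hzJ hz
        have I2 := IH _ (mul_mem (mul_mem hqH hzJ) hqH') (S.tw_conj hz (cs.inv_simple i))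
        rcases lt_or_lt cs i z with h | h
        · rw [S.r3 i _ z hlt' hz hc h, S.r3 i _ z hlt hz hc h, I2]
        · rw [S.r4 i _ z hlt' hz hc h, S.r4 i _ z hlt hz hc h, I1, I2]; ring

/-- Alternating products `c c^* c ⋯` with `n` factors. -/
def alt (st : W ≃* W) : W → ℕ → W
  | _, 0 => 1
  | c, n + 1 => c * alt st (st c) n

theorem Setup.alt_odd (S : Setup cs st p) (c : W) (n : ℕ) :
    alt st c (2 * n + 1) = alt st c (2 * n) * c := by
  induction n with
  | zero => simp [alt]
  | succ n ih =>
    have e : ∀ k, alt st c (k + 2) = c * (st c * alt st c k) := by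
      intro k; simp [alt, S.invol]
    rw [show 2 * (n + 1) + 1 = 2 * n + 1 + 2 by ring, e, ih,
      show 2 * (n + 1) = 2 * n + 2 by ring, e]
    simp [mul_assoc]

theorem alt_st (st : W ≃* W) (c : W) (n : ℕ) : alt st (st c) n = st (alt st c n) := by
  induction n generalizing c with
  | zero => simp [alt]
  | succ n ih => simp [alt, ih]

theorem Setup.alt_snoc (S : Setup cs st p) (i : B) (n : ℕ) :
    ∃ k, alt st (cs.simple i) (n + 1) = alt st (cs.simple i) n * cs.simple k := by
  induction n generalizing i with
  | zero => exact ⟨i, by simp [alt]⟩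
  | succ n ih =>
    obtain ⟨j, hj⟩ := S.simples i
    obtain ⟨k, hk⟩ := ih j
    refine ⟨k, ?_⟩
    rw [alt, hj, hk, alt, hj, mul_assoc]

theorem Setup.alt_len_add (S : Setup cs st p) (i : B) (m r : ℕ) :
    cs.length (alt st (cs.simple i) (m + r)) ≤ cs.length (alt st (cs.simple i) m) + r := by
  induction r with
  | zero => simp
  | succ r ih =>
    obtain ⟨k, hk⟩ := S.alt_snoc i (m + r)
    have := cs.length_mul_simple (alt st (cs.simple i) (m + r)) k
    rw [← add_assoc, hk]
    omega

theorem Setup.alt_red (S : Setup cs st p) (i : B) (m k : ℕ) (hk : k ≤ m)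
    (h : cs.length (alt st (cs.simple i) m) = m) : cs.length (alt st (cs.simple i) k) = k := by
  have h1 := S.alt_len_add i k (m - k)
  have h2 := S.alt_len_add i 0 k
  rw [Nat.add_sub_cancel' hk] at h1
  simp [alt] at h2
  omega

/-- The dihedral computation. -/
theorem Setup.dihedral (S : Setup cs st p) (m r : ℕ) : ∀ (j : ℕ) (i : B), 2 * j + r = m →
    cs.length (alt st (cs.simple i) m) = m →
    st (alt st (st (cs.simple i)) (2 * j)) = (alt st (st (cs.simple i)) (2 * j))⁻¹ →
    X ^ m ∣ p (alt st (st (cs.simple i)) (2 * j)) (alt st (cs.simple i) (m - j))⁻¹ := by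
  induction r using Nat.strong_induction_on with
  | _ r ih =>
    intro j i hm hred hz
    set z := alt st (st (cs.simple i)) (2 * j) with hzd
    have hlz : cs.length z = 2 * j := by
      rw [hzd, alt_st, S.length_st]
      exact S.alt_red i m _ (by omega) hred
    by_cases hr : r = 0
    · have := S.dvd_z (alt st (cs.simple i) (m - j))⁻¹ z hz
      rwa [hlz, show 2 * j = m by omega] at this
    have ey : (alt st (cs.simple i) (m - j))⁻¹ * cs.simple i =
        (alt st (st (cs.simple i)) (m - (j + 1)))⁻¹ := by
      rw [show m - j = m - (j + 1) + 1 by omega, alt]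
      simp
    have hy : cs.length ((alt st (cs.simple i) (m - j))⁻¹ * cs.simple i) <
        cs.length (alt st (cs.simple i) (m - j))⁻¹ := by
      rw [ey, cs.length_inv, cs.length_inv, alt_st, S.length_st,
        S.alt_red i m _ (by omega) hred, S.alt_red i m _ (by omega) hred]
      omega
    have esz : cs.simple i * z = alt st (cs.simple i) (2 * j + 1) := by rw [alt]
    have hsz : cs.length (cs.simple i * z) = 2 * j + 1 := by
      rw [esz]; exact S.alt_red i m _ (by omega) hred
    by_cases hr1 : r = 1
    · have := S.step hy hz (by omega)
      rwa [hlz, show 2 * j + 1 = m by omega] at this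
    have e2 : cs.simple i * z * st (cs.simple i) = alt st (cs.simple i) (2 * j + 2) := by
      rw [alt, S.alt_odd, mul_assoc]
    have hl2 : cs.length (cs.simple i * z * st (cs.simple i)) = 2 * j + 2 := by
      rw [e2]; exact S.alt_red i m _ (by omega) hred
    have hne : cs.simple i * z ≠ z * st (cs.simple i) := by
      intro h
      have hss : st (cs.simple i) * st (cs.simple i) = 1 := by rw [← map_mul]; simp
      rw [h, mul_assoc, hss, mul_one] at hl2
      omega
    rw [S.r3 i _ z hy hz hne (by omega), ey, e2]
    obtain ⟨i', hi'⟩ := S.simples i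
    have hback : st (cs.simple i') = cs.simple i := by rw [← hi', S.invol]
    have := ih (r - 2) (by omega) (j + 1) i' (by omega)
      (by rw [← hi', alt_st, S.length_st]; exact hred)
      (by
        rw [hback, show 2 * (j + 1) = 2 * j + 2 by ring, ← e2]
        exact S.tw_conj hz (cs.inv_simple i))
    rwa [hback, ← hi'] at this

theorem Setup.exists_alt (S : Setup cs st p) (i : B) (w : W)
    (hw : w ∈ Subgroup.closure {cs.simple i, st (cs.simple i)}) :
    ∃ d ∈ ({cs.simple i, st (cs.simple i)} : Set W), w = (alt st d (cs.length w))⁻¹ := by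
  have hJ : ∀ q ∈ ({cs.simple i, st (cs.simple i)} : Set W), ∃ k, q = cs.simple k := by
    rintro q (rfl | rfl)
    · exact ⟨i, rfl⟩
    · exact S.simples i
  induction hn : cs.length w using Nat.strong_induction_on generalizing w with
  | _ n ih =>
    by_cases h1 : w = 1
    · refine ⟨cs.simple i, by simp, ?_⟩
      rw [h1, cs.length_one] at hn
      rw [h1, ← hn]; simp [alt]
    · obtain ⟨q, hq, hlt⟩ := exists_desc cs hJ hw h1
      have hwq := mul_mem hw (Subgroup.subset_closure hq)
      obtain ⟨d, hd, he⟩ := ih _ (hn ▸ hlt) _ hwq rfl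
      refine ⟨q, hq, ?_⟩
      obtain ⟨k, hk⟩ := hJ q hq
      have h2 := cs.length_mul_simple w k
      rw [← hk] at h2
      have hqq : q * q = 1 := by rw [hk]; simp
      have hqi : q⁻¹ = q := by rw [hk]; simp
      obtain ⟨a, rfl⟩ : ∃ a, n = a + 1 := ⟨n - 1, by omega⟩
      rw [show cs.length (w * q) = a by omega] at he
      have goal2 : alt st d a = alt st (st q) a := by
        cases a with
        | zero => simp [alt]
        | succ a =>
          by_cases hdq : d = q
          · exfalso
            have e : w = (alt st (st d) a)⁻¹ := by
              have : w = w * q * q := by rw [mul_assoc, hqq, mul_one]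
              rw [this, he, alt, hdq, mul_inv_rev, hqi, mul_assoc, hqq, mul_one]
            have h3 : cs.length w ≤ a := by
              rw [e, cs.length_inv]
              obtain ⟨k', hk'⟩ := S.simples k
              have := S.alt_len_add k' 0 a
              rw [hdq, hk, hk']
              simpa [alt] using this
            omega
          · congr 1
            rcases hd with rfl | rfl <;> rcases hq with rfl | rfl
            · exact absurd rfl hdq
            · rw [S.invol]
            · rfl
            · exact absurd rfl hdq
      rw [alt, mul_inv_rev, ← goal2, ← he, hqi, mul_assoc, hqq, mul_one]

theorem Setup.dvd_one (S : Setup cs st p) (y : W) : X ^ cs.length y ∣ p 1 y := by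
  induction hn : cs.length y using Nat.strong_induction_on generalizing y with
  | _ n ih =>
    by_cases h1 : y = 1
    · rw [h1, cs.length_one] at hn
      rw [← hn, pow_zero]; exact one_dvd _
    obtain ⟨i, hi⟩ := cs.exists_rightDescent_of_ne_one h1
    have hi : cs.length (y * cs.simple i) < cs.length y := hi
    have hJ : ∀ q ∈ ({cs.simple i, st (cs.simple i)} : Set W), ∃ k, q = cs.simple k := by
      rintro q (rfl | rfl)
      · exact ⟨i, rfl⟩
      · exact S.simples i
    have hJst : ∀ q ∈ ({cs.simple i, st (cs.simple i)} : Set W),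
        st q ∈ ({cs.simple i, st (cs.simple i)} : Set W) := by
      rintro q (rfl | rfl)
      · simp
      · simp [S.invol]
    obtain ⟨h, hh, hmin⟩ := exists_minimalFor_of_wellFoundedLT
      (fun h => h ∈ Subgroup.closure {cs.simple i, st (cs.simple i)})
      (fun h => cs.length (y * h)) ⟨1, one_mem _⟩
    have hmin' : ∀ h' ∈ Subgroup.closure {cs.simple i, st (cs.simple i)},
        cs.length (y * h) ≤ cs.length (y * h') := by
      intro h' hh'
      rcases le_total (cs.length (y * h)) (cs.length (y * h')) with hle | hle
      · exact hle
      · exact hmin hh' hle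
    have hx : ∀ h' ∈ Subgroup.closure {cs.simple i, st (cs.simple i)},
        cs.length (y * h) ≤ cs.length (y * h * h') := by
      intro h' hh'
      rw [mul_assoc]
      exact hmin' _ (mul_mem hh hh')
    have e : y * h * h⁻¹ = y := by simp
    have hadd := additive cs hJ hx (inv_mem hh)
    have hf := S.factor hJ hJst hx h⁻¹ (inv_mem hh) 1 (one_mem _) (by simp)
    rw [e] at hadd hf
    have hlt := hmin' (cs.simple i) (Subgroup.subset_closure (by simp))
    rw [hf, ← hn, hadd, add_comm, pow_add]
    refine mul_dvd_mul ?_ (ih _ (by omega) _ rfl)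
    obtain ⟨d, hd, hw⟩ := S.exists_alt i h⁻¹ (inv_mem hh)
    obtain ⟨k, rfl⟩ := hJ d hd
    have hred : cs.length (alt st (cs.simple k) (cs.length h⁻¹)) = cs.length h⁻¹ := by
      rw [← cs.length_inv (alt _ _ _), ← hw]
    have hD := S.dihedral (cs.length h⁻¹) (cs.length h⁻¹) 0 k (by omega) hred (by simp [alt])
    rw [Nat.sub_zero, ← hw] at hD
    exact hD

end Parabolic

theorem setup_of_XRec {B W : Type} [Group W] {M : CoxeterMatrix B}
    (cs : CoxeterSystem M W) (st : W ≃* W)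
    (hst_inv : ∀ w, st (st w) = w)
    (hst_S : ∀ i : B, ∃ j : B, st (cs.simple i) = cs.simple j)
    (P : {z : W // st z = z⁻¹} → W → Polynomial ℤ) (hP : XRec cs st P) :
    Setup cs st (fun z y => if h : st z = z⁻¹ then P ⟨z, h⟩ y else 0) := by
  have conj : ∀ {z : W} {i : B}, st z = z⁻¹ → st (cs.simple i * z * st (cs.simple i)) =
      (cs.simple i * z * st (cs.simple i))⁻¹ := by
    intro z i hz
    rw [map_mul, map_mul, hz, hst_inv, mul_inv_rev, mul_inv_rev, cs.inv_simple, ← map_inv,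
      cs.inv_simple, mul_assoc]
  refine ⟨hst_inv, hst_S, ?_, ?_, ?_, ?_, ?_⟩
  · intro z
    by_cases h : st z = z⁻¹
    · simp only [dif_pos h]
      exact hP.1 ⟨z, h⟩
    · have : z ≠ 1 := by rintro rfl; simp at h
      simp only [dif_neg h, if_neg this]
  · intro i y z hy hz hc hl
    simp only [dif_pos hz, dif_pos (tw_comm hz hc)]
    exact (hP.2 i y hy ⟨z, hz⟩).1 hc hl _
  · intro i y z hy hz hc hl
    simp only [dif_pos hz, dif_pos (tw_comm hz hc)]
    exact (hP.2 i y hy ⟨z, hz⟩).2.1 hc hl _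
  · intro i y z hy hz hc hl
    simp only [dif_pos hz, dif_pos (conj (i := i) hz)]
    exact (hP.2 i y hy ⟨z, hz⟩).2.2.1 hc hl _
  · intro i y z hy hz hc hl
    simp only [dif_pos hz, dif_pos (conj (i := i) hz)]
    exact (hP.2 i y hy ⟨z, hz⟩).2.2.2 hc hl _

end InvHecke


/-- **Proposition 1.9.** For every `(z, y) ∈ I_* × W`, the polynomial `X^z_y`
is divisible by `u^{l(y)}`, hence by `u^{max(l(z), l(y))}`. -/
theorem statement15 {B W : Type} [Group W] [Finite B] {M : CoxeterMatrix B}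
    (cs : CoxeterSystem M W) (st : W ≃* W)
    (hst_inv : ∀ w, st (st w) = w)
    (hst_S : ∀ i : B, ∃ j : B, st (cs.simple i) = cs.simple j)
    (P : {z : W // st z = z⁻¹} → W → Polynomial ℤ) (hP : XRec cs st P)
    (z : {z : W // st z = z⁻¹}) (y : W) :
    X ^ cs.length y ∣ P z y ∧ X ^ max (cs.length z.1) (cs.length y) ∣ P z y := by
  have S := InvHecke.setup_of_XRec cs st hst_inv hst_S P hP
  have h1 := S.dvd_y_of_one S.dvd_one z.1 z.2 y
  have h2 := S.dvd_z y z.1 z.2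
  simp only [dif_pos z.2] at h1 h2
  refine ⟨h1, ?_⟩
  rcases max_choice (cs.length z.1) (cs.length y) with h | h <;> rw [h]
  · exact h2
  · exact h1
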